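/- Let B⁺ be the positive braid monoid of a finite Coxeter system and Δ its Garside element (the positive lift of the longest element w₀). Then for every x ∈ B⁺ there exist y ∈ B⁺ and m ∈ ℤ_{≥0} such that x y = Δ^m; that is, every positive braid left-divides a power of the Garside element. -/

import Mathlib

/-- The alternating word `i j i j ⋯` of length `m`, as an element of the free monoid. -/
def altWord {B : Type*} (i j : B) (m : ℕ) : FreeMonoid B :=
  FreeMonoid.ofList ((List.range m).map fun t => if t % 2 = 0 then i else j)

/-- The braid relations of a Coxeter matrix `M`, as a relation on the free monoid:
for `i ≠ j`, the alternating words `i j i ⋯` and `j i j ⋯` of length `M i j` coincide. -/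
def braidRel {B : Type*} (M : CoxeterMatrix B) : FreeMonoid B → FreeMonoid B → Prop :=
  fun a b => ∃ i j : B, i ≠ j ∧ a = altWord i j (M i j) ∧ b = altWord j i (M i j)

/-- The positive braid monoid (Artin–Tits monoid) `B⁺` attached to a Coxeter matrix `M`:
the free monoid on the generators modulo the braid relations. -/
abbrev ArtinTitsMonoid {B : Type*} (M : CoxeterMatrix B) :=
  (conGen (braidRel M)).Quotient

/-- The generator `r_i ∈ B⁺`. -/
def atGen {B : Type*} (M : CoxeterMatrix B) (i : B) : ArtinTitsMonoid M :=
  (conGen (braidRel M)).mk' (FreeMonoid.of i)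

namespace CoxeterMatrix
open Real Polynomial.Chebyshev

variable {B : Type*} (M : CoxeterMatrix B)

noncomputable section

/-- The entries `-2 cos (π / M i j)` of (twice) the Tits form; infinite bonds, encoded by
`M i j = 0`, contribute `-2`. -/
def cosEntry (i j : B) : ℝ := -2 * cos (π / M i j)

theorem cosEntry_comm (i j : B) : M.cosEntry i j = M.cosEntry j i := by
  rw [cosEntry, cosEntry, M.symmetric]

/-- The coroot of the simple reflection `i` in the geometric representation. -/
def simpleCoroot (i : B) : Module.Dual ℝ (B →₀ ℝ) := Finsupp.linearCombination ℝ (M.cosEntry i)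

theorem simpleCoroot_single (i j : B) :
    M.simpleCoroot i (Finsupp.single j 1) = M.cosEntry i j := by
  simp [simpleCoroot]

theorem simpleCoroot_single_self (i : B) : M.simpleCoroot i (Finsupp.single i 1) = 2 := by
  simp [simpleCoroot_single, cosEntry]

/-- The simple reflection `i` of the geometric representation. -/
def simpleReflection (i : B) : (B →₀ ℝ) ≃ₗ[ℝ] (B →₀ ℝ) :=
  Module.reflection (M.simpleCoroot_single_self i)

theorem cosEntry_mul_cosEntry_sub_two (i j : B) :
    M.cosEntry i j * M.cosEntry j i - 2 = 2 * cos (2 * π / M i j) := by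
  rw [M.cosEntry_comm j i, cosEntry, mul_div_assoc, cos_two_mul]
  ring

end

theorem sin_two_pi_div_pos {m : ℕ} (hm : 3 ≤ m) : 0 < sin (2 * π / m) := by
  have hm' : (3 : ℝ) ≤ m := by exact_mod_cast hm
  apply sin_pos_of_pos_of_lt_pi
  · positivity
  · rw [div_lt_iff₀ (by linarith)]
    nlinarith [pi_pos]

theorem isLiftable_simpleReflection : M.IsLiftable M.simpleReflection := by
  intro i j
  obtain h0 | h1 | h2 | h3 : M i j = 0 ∨ M i j = 1 ∨ M i j = 2 ∨ 3 ≤ M i j := by omega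
  · simp [h0]
  · obtain rfl : i = j := by
      by_contra h
      exact M.off_diagonal i j h h1
    rw [h1, pow_one]
    ext1 v
    exact Module.involutive_reflection (M.simpleCoroot_single_self i) v
  · have hij : M.cosEntry i j = 0 := by simp [cosEntry, h2]
    have hji : M.cosEntry j i = 0 := by rw [cosEntry_comm, hij]
    rw [h2]
    apply LinearEquiv.ext
    intro v
    simp only [simpleReflection]
    rw [Module.reflection_mul_reflection_pow_apply]
    simp only [simpleCoroot_single, hij, hji]
    norm_num
    abel
  · apply LinearEquiv.ext
    intro v
    simp only [simpleReflection]
    rw [Module.reflection_mul_reflection_pow_apply _ _ _ _ (2 * cos (2 * π / M i j))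
      (by rw [simpleCoroot_single, simpleCoroot_single, cosEntry_mul_cosEntry_sub_two])]
    have hsin := (sin_two_pi_div_pos h3).ne'
    have hm : (M i j : ℝ) ≠ 0 := by positivity
    obtain ⟨p, hp | hp⟩ := Nat.even_or_odd' (M i j)
    · have key : (S ℝ (p - 1 : ℤ)).eval (2 * cos (2 * π / M i j)) = 0 := by
        have := S_two_mul_real_cos (2 * π / M i j) (p - 1)
        rw [show ((p - 1 : ℤ) + 1 : ℝ) * (2 * π / M i j) = π by
          have : (M i j : ℝ) = 2 * p := by rw [hp]; push_cast; ring
          push_cast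
          field_simp
          rw [this]; ring, sin_pi] at this
        exact (mul_eq_zero.mp this).resolve_right hsin
      rw [show ((M i j : ℤ) - 2) / 2 = p - 1 by omega, show ((M i j : ℤ) - 1) / 2 = p - 1 by omega,
        key]
      simp
    · have key : (S ℝ (p : ℤ)).eval (2 * cos (2 * π / M i j)) +
          (S ℝ (p - 1 : ℤ)).eval (2 * cos (2 * π / M i j)) = 0 := by
        have e1 := S_two_mul_real_cos (2 * π / M i j) (p - 1)
        have e2 := S_two_mul_real_cos (2 * π / M i j) p
        have : ((p : ℤ) + 1 : ℝ) * (2 * π / M i j) =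
            2 * π - ((p - 1 : ℤ) + 1 : ℝ) * (2 * π / M i j) := by
          have : (M i j : ℝ) = 2 * p + 1 := by rw [hp]; push_cast; ring
          push_cast
          field_simp
          rw [this]; ring
        rw [this, sin_two_pi_sub] at e2
        have : ((S ℝ (p : ℤ)).eval (2 * cos (2 * π / M i j)) +
          (S ℝ (p - 1 : ℤ)).eval (2 * cos (2 * π / M i j))) * sin (2 * π / M i j) = 0 := by
          rw [add_mul, e1, e2]; ring
        exact (mul_eq_zero.mp this).resolve_right hsin
      rw [show ((M i j : ℤ) - 2) / 2 = p - 1 by omega, show ((M i j : ℤ) - 1) / 2 = p by omega,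
        show ((M i j : ℤ) - 3) / 2 = p - 1 by omega, show (M i j : ℤ) / 2 = p by omega, key]
      simp

theorem simpleReflection_mul_pow_ne_one {i j : B} (hij : i ≠ j) {k : ℕ} (hk : 0 < k)
    (hkM : M i j = 0 ∨ k < M i j) :
    (M.simpleReflection i * M.simpleReflection j) ^ k ≠ 1 := by
  classical
  intro h
  have hv := congrArg (fun φ : (B →₀ ℝ) ≃ₗ[ℝ] (B →₀ ℝ) => φ (Finsupp.single i 1)) h
  simp only [simpleReflection] at hv
  rw [Module.reflection_mul_reflection_pow_apply_self _ _ _ (2 * cos (2 * π / M i j))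
      (by rw [simpleCoroot_single, simpleCoroot_single, cosEntry_mul_cosEntry_sub_two])] at hv
  have h1 := DFunLike.congr_fun hv i
  have h2 := DFunLike.congr_fun hv j
  simp only [simpleCoroot_single, Finsupp.smul_single, Finsupp.add_apply, Finsupp.single_apply,
    hij, hij.symm, LinearEquiv.coe_one, id] at h1 h2
  simp at h1 h2
  obtain h0 | hm1 | hm2 | h3 : M i j = 0 ∨ M i j = 1 ∨ M i j = 2 ∨ 3 ≤ M i j := by omega
  · have : M.cosEntry j i ≠ 0 := by rw [cosEntry_comm]; simp [cosEntry, h0]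
    rcases h2 with h2 | h2
    · simp [h0, S_eval_two] at h2
      omega
    · exact this h2
  · exact M.off_diagonal i j hij hm1
  · obtain rfl : k = 1 := by omega
    rw [hm2] at h1
    norm_num at h1
  · have hsin := (sin_two_pi_div_pos h3).ne'
    have hm : (3 : ℝ) ≤ M i j := by exact_mod_cast h3
    have hc : M.cosEntry j i ≠ 0 := by
      rw [cosEntry_comm, cosEntry]
      have : 0 < cos (π / M i j) := by
        apply cos_pos_of_mem_Ioo
        constructor
        · have : 0 < π / M i j := by positivity
          linarith [pi_pos]
        · rw [div_lt_div_iff₀ (by linarith) (by norm_num)]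
          nlinarith [pi_pos]
      linarith
    have h2 := h2.resolve_right hc
    rw [h2, add_zero] at h1
    have e1 := S_two_mul_real_cos (2 * π / M i j) (k - 1)
    have e2 := S_two_mul_real_cos (2 * π / M i j) k
    rw [h2] at e1
    rw [h1] at e2
    push_cast at e1 e2
    rw [add_mul, sin_add] at e2
    simp only [sub_add_cancel, zero_mul, one_mul] at e1 e2
    rw [← e1] at e2
    have hcos : cos (k * (2 * π / M i j)) = 1 := by
      apply mul_right_cancel₀ hsin
      linarith
    obtain ⟨n, hn⟩ := (cos_eq_one_iff _).mp hcos
    have hk' : (n : ℝ) * M i j = k := by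
      field_simp at hn
      nlinarith [pi_pos]
    have hk'' : n * (M i j : ℤ) = k := by exact_mod_cast hk'
    have hlt : (k : ℤ) < M i j := by omega
    have hn0 : 0 < n := by
      by_contra hneg
      have : n * (M i j : ℤ) ≤ 0 := mul_nonpos_of_nonpos_of_nonneg (by omega) (by omega)
      omega
    nlinarith

end CoxeterMatrix

theorem CoxeterSystem.simple_mul_simple_pow_ne_one {B W : Type*} [Group W] {M : CoxeterMatrix B}
    (cs : CoxeterSystem M W) {i j : B} (hij : i ≠ j) {k : ℕ} (hk : 0 < k)
    (hkM : M i j = 0 ∨ k < M i j) : (cs.simple i * cs.simple j) ^ k ≠ 1 := by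
  intro h
  have := congrArg (cs.lift ⟨_, M.isLiftable_simpleReflection⟩) h
  rw [map_pow, map_mul, cs.lift_apply_simple, cs.lift_apply_simple, map_one] at this
  exact M.simpleReflection_mul_pow_ne_one hij hk hkM this

namespace CoxeterSystem
variable {B W : Type*} [Group W] {M : CoxeterMatrix B} (cs : CoxeterSystem M W)

section SignedConjugation
open Classical

/-- The permutation `(t, ε) ↦ (s_i t s_i, ε + [t = s_i])` of `W × ℤ/2`. -/
noncomputable def signedConj (i : B) : Equiv.Perm (W × ZMod 2) :=
  Function.Involutive.toPerm
    (fun p => (cs.simple i * p.1 * cs.simple i, p.2 + if p.1 = cs.simple i then 1 else 0)) <| by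
      rintro ⟨t, ε⟩
      have h : cs.simple i * t * cs.simple i = cs.simple i ↔ t = cs.simple i := by
        constructor
        · intro h
          simpa using congrArg (cs.simple i * ·) (mul_eq_right.mp h) |>.trans (mul_one _)
        · rintro rfl; simp
      ext
      · simp [mul_assoc]
      · simp only [h, add_assoc, CharTwo.add_self_eq_zero, add_zero]

theorem signedConj_apply (i : B) (t : W) (ε : ZMod 2) :
    cs.signedConj i (t, ε) =
      (cs.simple i * t * cs.simple i, ε + if t = cs.simple i then 1 else 0) := rfl

theorem signedConj_mul_pow_apply (i j : B) (n : ℕ) (t : W) (ε : ZMod 2) :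
    ((cs.signedConj i * cs.signedConj j) ^ n) (t, ε) =
      ((cs.simple i * cs.simple j) ^ n * t * ((cs.simple i * cs.simple j) ^ n)⁻¹,
        ε + ∑ k ∈ Finset.range (2 * n),
          if t = cs.simple j * (cs.simple i * cs.simple j) ^ k then 1 else 0) := by
  induction n with
  | zero => simp
  | succ n ih =>
    rw [pow_succ', Equiv.Perm.mul_apply, ih, Equiv.Perm.mul_apply, signedConj_apply,
      signedConj_apply, show 2 * (n + 1) = 2 * n + 1 + 1 by ring, Finset.sum_range_succ,
      Finset.sum_range_succ]
    set x := cs.simple i * cs.simple j with hx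
    have hconj : ∀ m : ℕ, (x ^ m)⁻¹ * cs.simple j = cs.simple j * x ^ m := by
      intro m
      have h1 : x⁻¹ = cs.simple j * x * (cs.simple j)⁻¹ := by simp [hx, mul_assoc]
      rw [← inv_pow, h1, conj_pow, inv_mul_cancel_right]
    have e1 : x ^ n * t * (x ^ n)⁻¹ = cs.simple j ↔ t = cs.simple j * x ^ (2 * n) := by
      rw [two_mul, pow_add, ← mul_assoc, ← hconj, mul_inv_eq_iff_eq_mul, eq_comm (a := t),
        mul_assoc, inv_mul_eq_iff_eq_mul, eq_comm]
    have e2 : cs.simple j * (x ^ n * t * (x ^ n)⁻¹) * cs.simple j = cs.simple i ↔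
        t = cs.simple j * x ^ (2 * n + 1) := by
      have hr : cs.simple j * x ^ (2 * n + 1) = (x ^ n)⁻¹ * cs.simple j * x * x ^ n := by
        rw [hconj, show 2 * n + 1 = n + 1 + n by ring, pow_add, pow_succ]
        simp only [mul_assoc]
      rw [hr]
      generalize x ^ n = y
      constructor
      · intro h
        rw [hx, ← h]
        simp [mul_assoc]
      · rintro rfl
        simp [hx, mul_assoc]
    simp only [e1, e2]
    ext
    · simp [pow_succ', hx, mul_assoc]
    · simp only [add_assoc]

theorem isLiftable_signedConj : M.IsLiftable cs.signedConj := by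
  intro i j
  ext1 ⟨t, ε⟩
  rw [signedConj_mul_pow_apply, simple_mul_simple_pow, two_mul, Finset.sum_range_add]
  simp only [pow_add, simple_mul_simple_pow, one_mul, CharTwo.add_self_eq_zero]
  simp

/-- The action of `W` on `W × ℤ/2` in which `s_i` acts by `signedConj i`. -/
noncomputable def signedConjHom : W →* Equiv.Perm (W × ZMod 2) :=
  cs.lift ⟨_, cs.isLiftable_signedConj⟩

/-- For a reflection `t`, the indicator in `ℤ/2` of `t` being a right inversion of `w`. -/
noncomputable def inversionSign (w t : W) : ZMod 2 := (cs.signedConjHom w (t, 0)).2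

theorem signedConjHom_simple (i : B) : cs.signedConjHom (cs.simple i) = cs.signedConj i :=
  cs.lift_apply_simple _ _

theorem signedConjHom_wordProd_apply (ω : List B) (t : W) (ε : ZMod 2) :
    cs.signedConjHom (cs.wordProd ω) (t, ε) =
      (cs.wordProd ω * t * (cs.wordProd ω)⁻¹, ε + (cs.rightInvSeq ω).count t) := by
  induction ω with
  | nil => simp
  | cons i ω ih =>
    have h : cs.wordProd ω * t * (cs.wordProd ω)⁻¹ = cs.simple i ↔
        (cs.wordProd ω)⁻¹ * cs.simple i * cs.wordProd ω = t := by
      rw [mul_inv_eq_iff_eq_mul, mul_assoc, inv_mul_eq_iff_eq_mul, eq_comm]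
    rw [wordProd_cons, map_mul, Equiv.Perm.mul_apply, ih, signedConjHom_simple, signedConj_apply,
      rightInvSeq, List.count_cons, h]
    ext
    · simp [mul_assoc]
    · simp [add_assoc]

theorem inversionSign_wordProd (ω : List B) (t : W) :
    cs.inversionSign (cs.wordProd ω) t = (cs.rightInvSeq ω).count t := by
  rw [inversionSign, signedConjHom_wordProd_apply, zero_add]

theorem signedConjHom_apply (w t : W) (ε : ZMod 2) :
    cs.signedConjHom w (t, ε) = (w * t * w⁻¹, ε + cs.inversionSign w t) := by
  obtain ⟨ω, rfl⟩ := cs.wordProd_surjective w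
  rw [signedConjHom_wordProd_apply, inversionSign_wordProd]

theorem inversionSign_mul (w₁ w₂ t : W) :
    cs.inversionSign (w₁ * w₂) t =
      cs.inversionSign w₂ t + cs.inversionSign w₁ (w₂ * t * w₂⁻¹) := by
  rw [inversionSign, map_mul, Equiv.Perm.mul_apply, signedConjHom_apply, signedConjHom_apply,
    zero_add]

theorem inversionSign_one (t : W) : cs.inversionSign 1 t = 0 := by simp [inversionSign]

theorem IsReflection.inversionSign_self {cs : CoxeterSystem M W} {t : W}
    (ht : cs.IsReflection t) : cs.inversionSign t t = 1 := by
  obtain ⟨w, i, rfl⟩ := ht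
  have h := cs.inversionSign_mul w w⁻¹ (w * cs.simple i * w⁻¹)
  have hs : cs.inversionSign (cs.simple i) (cs.simple i) = 1 := by
    simp [inversionSign, signedConjHom_simple, signedConj_apply]
  rw [mul_inv_cancel, inversionSign_one] at h
  rw [mul_assoc, inversionSign_mul, inversionSign_mul]
  simp only [mul_assoc, inv_mul_cancel_left, inv_mul_cancel, mul_one, inv_inv,
    mul_inv_rev, inv_simple, simple_mul_simple_cancel_left, hs] at h ⊢
  linear_combination -h

theorem mem_rightInvSeq_of_inversionSign_eq_one {ω : List B} {t : W}
    (h : cs.inversionSign (cs.wordProd ω) t = 1) : t ∈ cs.rightInvSeq ω := by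
  rw [inversionSign_wordProd] at h
  by_contra hn
  simp [List.count_eq_zero_of_not_mem hn] at h

theorem length_mul_lt_of_inversionSign_eq_one {w t : W} (h : cs.inversionSign w t = 1) :
    cs.length (w * t) < cs.length w := by
  obtain ⟨ω, hω, rfl⟩ := cs.exists_isReduced w
  exact (cs.isRightInversion_of_mem_rightInvSeq hω
    (cs.mem_rightInvSeq_of_inversionSign_eq_one h)).2

theorem IsReflection.inversionSign_eq_one_iff {cs : CoxeterSystem M W} {w t : W}
    (ht : cs.IsReflection t) :
    cs.inversionSign w t = 1 ↔ cs.length (w * t) < cs.length w := by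
  refine ⟨cs.length_mul_lt_of_inversionSign_eq_one, fun hlt => ?_⟩
  by_contra hne
  have h0 : cs.inversionSign w t = 0 := by
    generalize cs.inversionSign w t = a at hne
    revert a; decide
  have h1 : cs.inversionSign (w * t) t = 1 := by
    rw [inversionSign_mul, ht.inversionSign_self, mul_inv_cancel_right, h0, add_zero]
  have := cs.length_mul_lt_of_inversionSign_eq_one h1
  rw [mul_assoc, ht.mul_self, mul_one] at this
  exact this.not_gt hlt

/-- The strong exchange property. -/
theorem IsRightInversion.mem_rightInvSeq {cs : CoxeterSystem M W} {ω : List B} {t : W}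
    (h : cs.IsRightInversion (cs.wordProd ω) t) : t ∈ cs.rightInvSeq ω :=
  cs.mem_rightInvSeq_of_inversionSign_eq_one (h.1.inversionSign_eq_one_iff.mpr h.2)

theorem IsLeftInversion.mem_leftInvSeq {cs : CoxeterSystem M W} {ω : List B} {t : W}
    (h : cs.IsLeftInversion (cs.wordProd ω) t) : t ∈ cs.leftInvSeq ω := by
  rw [← cs.isRightInversion_inv_iff, ← wordProd_reverse] at h
  simpa [rightInvSeq_reverse] using h.mem_rightInvSeq

end SignedConjugation

theorem length_mul_inv_add_length {w₀ : W} (hw₀ : ∀ w : W, cs.length w ≤ cs.length w₀) (w : W) :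
    cs.length (w₀ * w⁻¹) + cs.length w = cs.length w₀ := by
  obtain ⟨ω, hω, rfl⟩ := cs.exists_isReduced w
  induction ω with
  | nil => simp
  | cons i ω ih =>
    have hω' : cs.IsReduced ω := by simpa using hω.drop 1
    specialize ih hω'
    set u := cs.wordProd ω with hu
    have ht : cs.IsReflection (u⁻¹ * cs.simple i * u) := by
      simpa using (cs.isReflection_simple i).conj u⁻¹
    have hlen : cs.length (cs.simple i * u) = cs.length u + 1 := by
      rw [← wordProd_cons, hω.eq, hω'.eq, List.length_cons]
    have h0 : cs.inversionSign u (u⁻¹ * cs.simple i * u) = 0 := by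
      have hne : cs.inversionSign u (u⁻¹ * cs.simple i * u) ≠ 1 := by
        rw [ne_eq, ht.inversionSign_eq_one_iff, show u * (u⁻¹ * cs.simple i * u) = cs.simple i * u
          by group]
        omega
      generalize cs.inversionSign u _ = a at hne
      revert a; decide
    have h1 : cs.inversionSign w₀ (u⁻¹ * cs.simple i * u) = 1 :=
      ht.inversionSign_eq_one_iff.mpr ((hw₀ _).lt_of_ne (ht.length_mul_left_ne w₀))
    rw [show w₀ = w₀ * u⁻¹ * u by group, inversionSign_mul, h0, zero_add,
      show u * (u⁻¹ * cs.simple i * u) * u⁻¹ = cs.simple i by group,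
      (cs.isReflection_simple i).inversionSign_eq_one_iff] at h1
    have h2 := cs.length_mul_simple (w₀ * u⁻¹) i
    rw [wordProd_cons, ← hu, hlen, mul_inv_rev, inv_simple, ← mul_assoc]
    omega

theorem exists_simple_mul_mul_simple_eq_longest {w₀ : W}
    (hw₀ : ∀ w : W, cs.length w ≤ cs.length w₀) (i : B) :
    ∃ j, cs.simple i * w₀ * cs.simple j = w₀ := by
  have hsq : w₀ * w₀ = 1 := by
    have := cs.length_mul_inv_add_length hw₀ w₀⁻¹
    rw [inv_inv, length_inv] at this
    exact cs.length_eq_zero_iff.mp (by omega)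
  have h1 : cs.length (w₀ * (cs.simple i * w₀)) = 1 := by
    have h := cs.length_mul_inv_add_length hw₀ (cs.simple i * w₀)⁻¹
    have hs := cs.length_simple_mul w₀ i
    have := hw₀ (cs.simple i * w₀)
    rw [inv_inv, length_inv] at h
    omega
  obtain ⟨j, hj⟩ := cs.length_eq_one_iff.mp h1
  refine ⟨j, ?_⟩
  rw [← hj, show cs.simple i * w₀ * (w₀ * (cs.simple i * w₀)) =
    cs.simple i * (w₀ * w₀) * cs.simple i * w₀ by group, hsq]
  simp

end CoxeterSystem

namespace CoxeterSystem
variable {B W : Type*} [Group W] {M : CoxeterMatrix B} (cs : CoxeterSystem M W)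

/-- The alternating word `i j i j ⋯` of length `m`, starting with `i`. -/
def alternatingList (i j : B) (m : ℕ) : List B := (alternatingWord j i m).reverse

theorem alternatingList_succ (i j : B) (m : ℕ) :
    alternatingList i j (m + 1) = i :: alternatingList j i m := by
  simp [alternatingList, alternatingWord_succ]

@[simp]
theorem length_alternatingList (i j : B) (m : ℕ) : (alternatingList i j m).length = m := by
  simp [alternatingList]

theorem ofList_alternatingList (i j : B) (m : ℕ) :
    FreeMonoid.ofList (alternatingList i j m) = altWord i j m := by
  rw [altWord]
  congr 1
  induction m generalizing i j with
  | zero => rfl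
  | succ m ih =>
    rw [alternatingList_succ, ih, List.range_succ_eq_map, List.map_cons, List.map_map]
    congr 1
    refine List.map_congr_left fun t _ => ?_
    simp only [Function.comp_apply]
    split_ifs <;> first | rfl | omega

theorem wordProd_alternatingList_comm (i j : B) :
    cs.wordProd (alternatingList i j (M i j)) = cs.wordProd (alternatingList j i (M i j)) := by
  have h := cs.wordProd_braidWord_eq j i
  rw [braidWord, braidWord, M.symmetric j i] at h
  rw [alternatingList, alternatingList, wordProd_reverse, wordProd_reverse, h]

theorem exists_eq_of_mem_leftInvSeq_alternatingList {i j : B} {m : ℕ} {t : W}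
    (ht : t ∈ cs.leftInvSeq (alternatingList i j m)) :
    ∃ p < m, t = (cs.simple i * cs.simple j) ^ p * cs.simple i := by
  induction m generalizing i j t with
  | zero => simp [alternatingList, alternatingWord] at ht
  | succ m ih =>
    rw [alternatingList_succ, leftInvSeq, List.mem_cons, List.mem_map] at ht
    rcases ht with rfl | ⟨t, ht, rfl⟩
    · exact ⟨0, m.succ_pos, by simp⟩
    · obtain ⟨p, hp, rfl⟩ := ih ht
      refine ⟨p + 1, by omega, ?_⟩
      have h : cs.simple i * (cs.simple j * cs.simple i) * (cs.simple i)⁻¹ =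
          cs.simple i * cs.simple j := by simp [mul_assoc]
      rw [MulAut.conj_apply, pow_succ, ← h, conj_pow]
      simp [mul_assoc]

theorem exists_isReduced_alternatingList_succ_append {i j : B} (hij : i ≠ j) {k : ℕ}
    (hk : M i j = 0 ∨ k < M i j) {ν : List B}
    (hν : cs.IsReduced (alternatingList i j k ++ ν))
    (hj : cs.IsLeftDescent (cs.wordProd (alternatingList i j k ++ ν)) j) :
    ∃ ν', cs.IsReduced (alternatingList j i (k + 1) ++ ν') ∧
      cs.wordProd (alternatingList j i (k + 1) ++ ν') =
        cs.wordProd (alternatingList i j k ++ ν) := by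
  rw [← isLeftInversion_simple_iff_isLeftDescent] at hj
  obtain ⟨q, hq, hqj⟩ := List.mem_iff_getElem.mp hj.mem_leftInvSeq
  have hkq : k ≤ q := by
    by_contra! hlt
    have hmem : cs.simple j ∈ cs.leftInvSeq (alternatingList i j k) := by
      have := cs.leftInvSeq_take (alternatingList i j k ++ ν) k
      rw [List.take_left' (by simp)] at this
      rw [this, ← hqj]
      exact List.mem_take_iff_getElem.mpr ⟨q, by omega, rfl⟩
    obtain ⟨p, hp, hpj⟩ := cs.exists_eq_of_mem_leftInvSeq_alternatingList hmem
    refine cs.simple_mul_simple_pow_ne_one hij p.succ_pos (by omega) ?_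
    rw [pow_succ, ← mul_assoc, ← hpj, simple_mul_simple_self]
  have hex := cs.getD_leftInvSeq_mul_wordProd (alternatingList i j k ++ ν) q
  rw [List.getD_eq_getElem _ _ hq, hqj, List.eraseIdx_append_of_length_le (by simpa)] at hex
  have hprod : cs.wordProd (alternatingList j i (k + 1) ++ ν.eraseIdx (q - k)) =
      cs.wordProd (alternatingList i j k ++ ν) := by
    rw [alternatingList_succ, List.cons_append, wordProd_cons]
    rw [length_alternatingList] at hex
    rw [← hex, simple_mul_simple_cancel_left]
  refine ⟨_, ?_, hprod⟩
  rw [IsReduced, hprod, hν.eq]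
  simp only [length_leftInvSeq, List.length_append, length_alternatingList] at hq ⊢
  rw [List.length_eraseIdx_of_lt (by omega)]
  omega

theorem exists_isReduced_alternatingList_append_of_le {i j : B} (hij : i ≠ j) {w : W}
    (hi : cs.IsLeftDescent w i) (hj : cs.IsLeftDescent w j) {k : ℕ}
    (hk : M i j = 0 ∨ k ≤ M i j) :
    ∃ ν, cs.IsReduced (alternatingList i j k ++ ν) ∧ cs.wordProd (alternatingList i j k ++ ν) = w ∨
      cs.IsReduced (alternatingList j i k ++ ν) ∧ cs.wordProd (alternatingList j i k ++ ν) = w := by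
  induction k with
  | zero =>
    obtain ⟨ω, hω, rfl⟩ := cs.exists_isReduced w
    exact ⟨ω, Or.inl ⟨hω, rfl⟩⟩
  | succ k ih =>
    obtain ⟨ν, ⟨hν, rfl⟩ | ⟨hν, rfl⟩⟩ := ih (by omega)
    · obtain ⟨ν', h⟩ := cs.exists_isReduced_alternatingList_succ_append hij (by omega) hν hj
      exact ⟨ν', Or.inr h⟩
    · obtain ⟨ν', h⟩ := cs.exists_isReduced_alternatingList_succ_append hij.symm
        (by rw [M.symmetric]; omega) hν hi
      exact ⟨ν', Or.inl h⟩

theorem coxeterMatrix_ne_zero_of_isLeftDescent {i j : B} (hij : i ≠ j) {w : W}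
    (hi : cs.IsLeftDescent w i) (hj : cs.IsLeftDescent w j) : M i j ≠ 0 := by
  intro h0
  obtain ⟨ν, ⟨hν, hw⟩ | ⟨hν, hw⟩⟩ := cs.exists_isReduced_alternatingList_append_of_le hij hi hj
    (k := cs.length w + 1) (Or.inl h0) <;>
  · have := hν.eq
    rw [hw, List.length_append, length_alternatingList] at this
    omega

/-- An element with two left descents `i ≠ j` has a reduced word starting with the braid word
`i j i ⋯`, and another one obtained from it by a single braid move. -/
theorem exists_isReduced_alternatingList_append {i j : B} (hij : i ≠ j) {w : W}
    (hi : cs.IsLeftDescent w i) (hj : cs.IsLeftDescent w j) :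
    ∃ ν, (cs.IsReduced (alternatingList i j (M i j) ++ ν) ∧
        cs.wordProd (alternatingList i j (M i j) ++ ν) = w) ∧
      cs.IsReduced (alternatingList j i (M i j) ++ ν) ∧
        cs.wordProd (alternatingList j i (M i j) ++ ν) = w := by
  obtain ⟨ν, h⟩ := cs.exists_isReduced_alternatingList_append_of_le hij hi hj (Or.inr le_rfl)
  refine ⟨ν, ?_⟩
  simp only [IsReduced, wordProd_append, cs.wordProd_alternatingList_comm i j, List.length_append,
    length_alternatingList] at h ⊢
  tauto

end CoxeterSystem

/-- The positive braid represented by a word in the generators. -/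
def atWord {B : Type*} (M : CoxeterMatrix B) (ω : List B) : ArtinTitsMonoid M :=
  (conGen (braidRel M)).mk' (FreeMonoid.ofList ω)

section ArtinTitsMonoid
variable {B : Type*} {M : CoxeterMatrix B}

theorem atWord_nil : atWord M [] = 1 := rfl

theorem atWord_append (ω ω' : List B) : atWord M (ω ++ ω') = atWord M ω * atWord M ω' := by
  simp only [atWord, FreeMonoid.ofList_append, map_mul]

theorem atWord_singleton (i : B) : atWord M [i] = atGen M i := rfl

theorem atWord_cons (i : B) (ω : List B) : atWord M (i :: ω) = atGen M i * atWord M ω :=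
  atWord_append [i] ω

theorem atWord_surjective : Function.Surjective (atWord M) := fun x => by
  obtain ⟨a, rfl⟩ := Con.mk'_surjective x
  exact ⟨FreeMonoid.toList a, rfl⟩

theorem atWord_alternatingList_comm {i j : B} (hij : i ≠ j) :
    atWord M (CoxeterSystem.alternatingList i j (M i j)) =
      atWord M (CoxeterSystem.alternatingList j i (M i j)) := by
  rw [atWord, atWord, CoxeterSystem.ofList_alternatingList, CoxeterSystem.ofList_alternatingList]
  exact (Con.eq _).mpr (ConGen.Rel.of _ _ ⟨i, j, hij, rfl, rfl⟩)

end ArtinTitsMonoid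

namespace CoxeterSystem
variable {B W : Type*} [Group W] {M : CoxeterMatrix B} (cs : CoxeterSystem M W)

theorem IsReduced.isLeftDescent_cons {cs : CoxeterSystem M W} {i : B} {ω : List B}
    (h : cs.IsReduced (i :: ω)) : cs.IsLeftDescent (cs.wordProd (i :: ω)) i := by
  have := cs.length_wordProd_le ω
  rw [IsLeftDescent, h.eq, wordProd_cons, simple_mul_simple_cancel_left, List.length_cons]
  omega

/-- Matsumoto's theorem: two reduced words of the same element represent the same
positive braid. -/
theorem IsReduced.atWord_eq {cs : CoxeterSystem M W} {ω ω' : List B} (hω : cs.IsReduced ω)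
    (hω' : cs.IsReduced ω') (h : cs.wordProd ω = cs.wordProd ω') : atWord M ω = atWord M ω' := by
  induction hn : ω.length generalizing ω ω' with
  | zero =>
    have hn' : ω'.length = 0 := by rw [← hω'.eq, ← h, hω.eq, hn]
    rw [List.length_eq_zero_iff.mp hn, List.length_eq_zero_iff.mp hn']
  | succ n ih =>
    have hn' : ω'.length = n + 1 := by rw [← hω'.eq, ← h, hω.eq, hn]
    have tails {i : B} {α β : List B} (hα : cs.IsReduced (i :: α)) (hβ : cs.IsReduced (i :: β))
        (hαβ : cs.wordProd (i :: α) = cs.wordProd (i :: β)) (hlen : (i :: α).length = n + 1) :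
        atWord M (i :: α) = atWord M (i :: β) := by
      rw [atWord_cons, atWord_cons]
      rw [wordProd_cons, wordProd_cons] at hαβ
      rw [ih (by simpa using hα.drop 1) (by simpa using hβ.drop 1) (mul_left_cancel hαβ)
        (by simpa using hlen)]
    obtain ⟨i, α, rfl⟩ := List.exists_cons_of_length_eq_add_one hn
    obtain ⟨j, β, rfl⟩ := List.exists_cons_of_length_eq_add_one hn'
    by_cases hij : i = j
    · subst hij
      exact tails hω hω' h hn
    · have hi := hω.isLeftDescent_cons
      have hj := hω'.isLeftDescent_cons
      rw [← h] at hj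
      obtain ⟨m, hm⟩ := Nat.exists_eq_succ_of_ne_zero
        (cs.coxeterMatrix_ne_zero_of_isLeftDescent hij hi hj)
      obtain ⟨ν, ⟨r₁, p₁⟩, r₂, p₂⟩ := cs.exists_isReduced_alternatingList_append hij hi hj
      have key : atWord M (alternatingList i j (M i j) ++ ν) =
          atWord M (alternatingList j i (M i j) ++ ν) := by
        rw [atWord_append, atWord_append, atWord_alternatingList_comm hij]
      simp only [hm, Nat.succ_eq_add_one, alternatingList_succ, List.cons_append]
        at r₁ p₁ r₂ p₂ key
      rw [tails hω r₁ p₁.symm hn, key, tails hω' r₂ (h.symm.trans p₂.symm) hn']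

end CoxeterSystem

/-- For a finite Coxeter system, every positive braid left-divides a power of the
Garside element `Δ` (characterized by `ℓ(Δ) = ℓ(w₀)` and `π(Δ) = w₀`, where `π : B⁺ → W`
is the natural projection and `ℓ` the word length on `B⁺`). -/
theorem stmt13 {B W : Type*} [Group W] {M : CoxeterMatrix B} (cs : CoxeterSystem M W)
    [Finite W]
    (π : ArtinTitsMonoid M →* W) (hπ : ∀ i : B, π (atGen M i) = cs.simple i)
    (len : ArtinTitsMonoid M → ℕ)
    (hlen_mul : ∀ a b : ArtinTitsMonoid M, len (a * b) = len a + len b)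
    (hlen_gen : ∀ i : B, len (atGen M i) = 1)
    (w₀ : W) (hw₀ : ∀ w : W, cs.length w ≤ cs.length w₀)
    (Δ : ArtinTitsMonoid M)
    (hΔlen : len Δ = cs.length w₀) (hΔπ : π Δ = w₀)
    (x : ArtinTitsMonoid M) :
    ∃ (y : ArtinTitsMonoid M) (m : ℕ), x * y = Δ ^ m := by
  have hlen_one : len 1 = 0 := by
    have := hlen_mul 1 1
    rw [mul_one] at this
    omega
  have hlen (ω : List B) : len (atWord M ω) = ω.length := by
    induction ω with
    | nil => exact hlen_one
    | cons i ω ih => rw [atWord_cons, hlen_mul, hlen_gen, ih, List.length_cons, add_comm]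
  have hprod (ω : List B) : π (atWord M ω) = cs.wordProd ω := by
    induction ω with
    | nil => rw [atWord_nil, map_one, cs.wordProd_nil]
    | cons i ω ih => rw [atWord_cons, map_mul, hπ, ih, cs.wordProd_cons]
  have hΔ (ω : List B) (hω : cs.wordProd ω = w₀) (hl : ω.length = cs.length w₀) :
      atWord M ω = Δ := by
    obtain ⟨ω₀, rfl⟩ := atWord_surjective Δ
    rw [hlen] at hΔlen
    rw [hprod] at hΔπ
    exact CoxeterSystem.IsReduced.atWord_eq (cs := cs) (by rw [CoxeterSystem.IsReduced, hω, hl])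
      (by rw [CoxeterSystem.IsReduced, hΔπ, hΔlen]) (hω.trans hΔπ.symm)
  have hgen (i : B) : ∃ (u : ArtinTitsMonoid M) (j : B),
      atGen M i * u = Δ ∧ u * atGen M j = Δ := by
    obtain ⟨ω, hω, hωi⟩ := cs.exists_isReduced (cs.simple i * w₀)
    obtain ⟨j, hj⟩ := cs.exists_simple_mul_mul_simple_eq_longest hw₀ i
    have hl : ω.length + 1 = cs.length w₀ := by
      rw [← hω.eq, ← hωi]
      have h1 := cs.length_simple_mul w₀ i
      have h2 := hw₀ (cs.simple i * w₀)
      omega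
    refine ⟨atWord M ω, j, ?_, ?_⟩
    · rw [← atWord_cons]
      exact hΔ _ (by rw [cs.wordProd_cons, ← hωi, cs.simple_mul_simple_cancel_left]) (by simpa)
    · rw [← atWord_singleton, ← atWord_append]
      exact hΔ _ (by rw [cs.wordProd_append, ← hωi, cs.wordProd_singleton, hj]) (by simpa)
  have hcomm (i : B) (m : ℕ) : ∃ k, atGen M i * Δ ^ m = Δ ^ m * atGen M k := by
    induction m with
    | zero => exact ⟨i, by simp⟩
    | succ m ih =>
      obtain ⟨k, hk⟩ := ih
      obtain ⟨u, j, h₁, h₂⟩ := hgen k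
      refine ⟨j, ?_⟩
      rw [pow_succ, ← mul_assoc, hk, mul_assoc, mul_assoc]
      nth_rw 2 [← h₂]
      rw [← mul_assoc (atGen M k), h₁]
  obtain ⟨ω, rfl⟩ := atWord_surjective x
  induction ω with
  | nil => exact ⟨1, 0, by rw [atWord_nil, mul_one, pow_zero]⟩
  | cons i ω ih =>
    obtain ⟨y, m, hy⟩ := ih
    obtain ⟨k, hk⟩ := hcomm i m
    obtain ⟨u, -, hu, -⟩ := hgen k
    refine ⟨y * u, m + 1, ?_⟩
    rw [atWord_cons, mul_assoc, ← mul_assoc (atWord M ω), hy, ← mul_assoc, hk, mul_assoc, hu,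
      pow_succ]
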